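/- arXiv:1606.07850 — 4 statements merged into one kernel-verified Lean document; each statement's English description precedes it below -/
import Mathlib

section
/- Let l ≥ -1/2 be real. Suppose u = u(z,s) is twice continuously differentiable on the region {(z,s) : 0 ≤ s < z} and satisfies ∂²u/∂z∂s + (l/(z-s))·∂u/∂z - (l/(z-s))·∂u/∂s = 0 there. Define H(x,t) = (xt)^{-l} · u((x+t)²/4, (t-x)²/4) for 0 < x ≤ t. Then: (i) for all 0 < x < t, ∂²H/∂x² - ∂²H/∂t² - (l(l+1)/x²)H + (l(l+1)/t²)H = 0; (ii) if moreover h is a continuous function on [0,b] and ∂u/∂z(z,0) - (l/z)·u(z,0) = (1/4)·h(√z)·z^{l-1/2} for all z ∈ (0,b²], then d/dx[H(x,x)] = h(x)/2 for all x ∈ (0,b]. -/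
/-!
In the characteristic coordinates `z = (x+t)²/4`, `s = (t-x)²/4` the function
`v(x,t) = u(z,s)` satisfies `v_xx - v_tt = (x² - t²) u_zs`, while
`v_x / x - v_t / t = -(x² - t²) / (2xt) · (u_z - u_s)`. Since `z - s = xt`, the
Euler–Poisson–Darboux equation therefore reads `v_xx - (2l/x) v_x = v_tt - (2l/t) v_t`, and the
factor `(xt)^{-l}` removes the first-order terms at the price of the potentials `l(l+1)/x²` and
`l(l+1)/t²`. Both coordinates are symmetric under `x ↔ t`, so only derivatives in `x` have to be
computed. On the diagonal `H(x,x) = x^{-2l} u(x²,0)`, which only involves `u_z` on `s = 0`.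
-/

open Filter Topology ContinuousLinearMap

section SecondPartials

variable {𝕜 E : Type*} [RCLike 𝕜] [NormedAddCommGroup E] [NormedSpace 𝕜 E]

theorem norm_rectangle_increment_sub_le {f fx fxy : 𝕜 → 𝕜 → E} {L : E} {S T : Set 𝕜} {C : ℝ}
    (hS : Convex ℝ S) (hT : Convex ℝ T)
    (hfx : ∀ x ∈ S, ∀ y ∈ T, HasDerivWithinAt (fun x' => f x' y) (fx x y) S x)
    (hfxy : ∀ x ∈ S, ∀ y ∈ T, HasDerivWithinAt (fx x) (fxy x y) T y)
    (hC : ∀ x ∈ S, ∀ y ∈ T, ‖fxy x y - L‖ ≤ C) {x₀ x y₀ y : 𝕜}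
    (hx₀ : x₀ ∈ S) (hx : x ∈ S) (hy₀ : y₀ ∈ T) (hy : y ∈ T) :
    ‖(f x y - f x y₀) - (f x₀ y - f x₀ y₀) - ((x - x₀) * (y - y₀)) • L‖
      ≤ C * ‖y - y₀‖ * ‖x - x₀‖ := by
  have hincr_deriv : ∀ x' ∈ S, HasDerivWithinAt
      (fun x' => f x' y - f x' y₀ - (x' * (y - y₀)) • L)
      (fx x' y - fx x' y₀ - (y - y₀) • L) S x' := fun x' hx' =>
    ((hfx x' hx' y hy).sub (hfx x' hx' y₀ hy₀)).sub
      ((hasDerivAt_mul_const (y - y₀)).smul_const L).hasDerivWithinAt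
  have hpartial_deriv : ∀ x' ∈ S, ∀ y' ∈ T,
      HasDerivWithinAt (fun y' => fx x' y' - y' • L) (fxy x' y' - L) T y' := fun x' hx' y' hy' => by
    simpa only [id, one_smul] using!
      (hfxy x' hx' y' hy').sub ((hasDerivAt_id y').smul_const L).hasDerivWithinAt
  have hpartial : ∀ x' ∈ S, ‖fx x' y - fx x' y₀ - (y - y₀) • L‖ ≤ C * ‖y - y₀‖ := fun x' hx' => by
    convert hT.norm_image_sub_le_of_norm_hasDerivWithin_le
      (hpartial_deriv x' hx') (hC x' hx') hy₀ hy using 2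
    module
  convert hS.norm_image_sub_le_of_norm_hasDerivWithin_le hincr_deriv hpartial hx₀ hx using 2
  module

/-- Peano's form of the symmetry of mixed partial derivatives: the existence of `∂ₓ∂_y f` is a
conclusion. -/
theorem hasDerivAt_snd_partial_of_continuousAt {f fx fxy : 𝕜 → 𝕜 → E} {fy : 𝕜 → E} {x₀ y₀ : 𝕜}
    (hfx : ∀ᶠ p in 𝓝 (x₀, y₀), HasDerivAt (fun x => f x p.2) (fx p.1 p.2) p.1)
    (hfxy : ∀ᶠ p in 𝓝 (x₀, y₀), HasDerivAt (fx p.1) (fxy p.1 p.2) p.2)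
    (hfy : ∀ᶠ x in 𝓝 x₀, HasDerivAt (f x) (fy x) y₀)
    (hcont : ContinuousAt ↿fxy (x₀, y₀)) :
    HasDerivAt fy (fxy x₀ y₀) x₀ := by
  set L := fxy x₀ y₀
  rw [hasDerivAt_iff_isLittleO, Asymptotics.isLittleO_iff]
  intro ε hε
  have hnear : ∀ᶠ p in 𝓝 (x₀, y₀), ‖fxy p.1 p.2 - L‖ ≤ ε := by
    filter_upwards [Metric.tendsto_nhds.1 hcont ε hε] with p hp
    exact (dist_eq_norm (fxy p.1 p.2) L ▸ hp).le
  obtain ⟨δ, hδ, hball⟩ :=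
    Metric.eventually_nhds_iff_ball.1 (hfx.and (hfxy.and hnear))
  rw [← ball_prod_same] at hball
  have hrect : ∀ x ∈ Metric.ball x₀ δ, ∀ y ∈ Metric.ball y₀ δ,
      ‖(f x y - f x y₀) - (f x₀ y - f x₀ y₀) - ((x - x₀) * (y - y₀)) • L‖
        ≤ ε * ‖y - y₀‖ * ‖x - x₀‖ := fun x hx y hy =>
    norm_rectangle_increment_sub_le (convex_ball x₀ δ) (convex_ball y₀ δ)
      (fun x hx y hy => (hball (x, y) ⟨hx, hy⟩).1.hasDerivWithinAt)
      (fun x hx y hy => (hball (x, y) ⟨hx, hy⟩).2.1.hasDerivWithinAt)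
      (fun x hx y hy => (hball (x, y) ⟨hx, hy⟩).2.2)
      (Metric.mem_ball_self hδ) hx (Metric.mem_ball_self hδ) hy
  filter_upwards [Metric.ball_mem_nhds x₀ hδ, hfy] with x hx hfyx
  have hderiv : HasDerivAt (fun y => f x y - f x₀ y - ((x - x₀) * y) • L)
      (fy x - fy x₀ - (x - x₀) • L) y₀ :=
    (hfyx.sub hfy.self_of_nhds).sub ((hasDerivAt_const_mul (x - x₀)).smul_const L)
  -- The rectangle estimate, divided by `‖y - y₀‖`, passes to the limit `y → y₀`.
  refine hderiv.le_of_lip' (by positivity) ?_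
  filter_upwards [Metric.ball_mem_nhds y₀ hδ] with y hy
  convert hrect x hx y hy using 1
  · congr 1
    module
  · ring

variable (𝕜) in
/-- The differential `dz ⊗ a + ds ⊗ b` on the `(z, s)`-plane, i.e. the derivative of a function
whose partial derivatives are `a` and `b`. -/
noncomputable def differentialOfPartials (a b : E) : 𝕜 × 𝕜 →L[𝕜] E :=
  (toSpanSingleton 𝕜 a).coprod (toSpanSingleton 𝕜 b)

theorem hasFDerivAt_of_continuousOn_partials {f fx fy : 𝕜 → 𝕜 → E} {D : Set (𝕜 × 𝕜)}
    (hD : IsOpen D)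
    (hfx : ∀ p ∈ D, HasDerivAt (fun x => f x p.2) (fx p.1 p.2) p.1)
    (hfy : ∀ p ∈ D, HasDerivAt (f p.1) (fy p.1 p.2) p.2)
    (hfx_cont : ContinuousOn ↿fx D) (hfy_cont : ContinuousOn ↿fy D) {p : 𝕜 × 𝕜} (hp : p ∈ D) :
    HasFDerivAt ↿f (differentialOfPartials 𝕜 (↿fx p) (↿fy p)) p := by
  have hDp : D ∈ 𝓝 p := hD.mem_nhds hp
  have hspan : Continuous (toSpanSingleton 𝕜 : E → 𝕜 →L[𝕜] E) :=
    (toSpanSingletonCLE (𝕜 := 𝕜) (E := E)).continuous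
  exact (hasStrictFDerivAt_uncurry_coprod
    (f₁ := fun x y => toSpanSingleton 𝕜 (fx x y)) (f₂ := fun x y => toSpanSingleton 𝕜 (fy x y))
    (eventually_of_mem hDp fun q hq => (hfx q hq).hasFDerivAt)
    (eventually_of_mem hDp fun q hq => (hfy q hq).hasFDerivAt)
    (hspan.continuousAt.comp (hfx_cont.continuousAt hDp))
    (hspan.continuousAt.comp (hfy_cont.continuousAt hDp))).hasFDerivAt

/-- `U` is twice differentiable at `p`, with partial derivatives `Uz`, `Us` near `p` and second
partial derivatives `a = U_zz`, `b = U_zs = U_sz`, `c = U_ss` at `p`. -/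
structure HasSecondPartialsAt (U Uz Us : 𝕜 × 𝕜 → E) (a b c : E) (p : 𝕜 × 𝕜) : Prop where
  eventually_hasFDerivAt : ∀ᶠ q in 𝓝 p, HasFDerivAt U (differentialOfPartials 𝕜 (Uz q) (Us q)) q
  hasFDerivAt_fst : HasFDerivAt Uz (differentialOfPartials 𝕜 a b) p
  hasFDerivAt_snd : HasFDerivAt Us (differentialOfPartials 𝕜 b c) p

theorem hasSecondPartialsAt_of_continuousOn {u uz us uzz uzs uss : 𝕜 → 𝕜 → E} {D : Set (𝕜 × 𝕜)}
    (hD : IsOpen D)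
    (huz : ∀ p ∈ D, HasDerivAt (fun z => u z p.2) (uz p.1 p.2) p.1)
    (hus : ∀ p ∈ D, HasDerivAt (u p.1) (us p.1 p.2) p.2)
    (huzz : ∀ p ∈ D, HasDerivAt (fun z => uz z p.2) (uzz p.1 p.2) p.1)
    (huzs : ∀ p ∈ D, HasDerivAt (uz p.1) (uzs p.1 p.2) p.2)
    (huss : ∀ p ∈ D, HasDerivAt (us p.1) (uss p.1 p.2) p.2)
    (huz_cont : ContinuousOn ↿uz D) (hus_cont : ContinuousOn ↿us D)
    (huzz_cont : ContinuousOn ↿uzz D) (huzs_cont : ContinuousOn ↿uzs D)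
    (huss_cont : ContinuousOn ↿uss D) {p : 𝕜 × 𝕜} (hp : p ∈ D) :
    HasSecondPartialsAt ↿u ↿uz ↿us (↿uzz p) (↿uzs p) (↿uss p) p := by
  have husz : ∀ q ∈ D, HasDerivAt (fun z => us z q.2) (uzs q.1 q.2) q.1 := fun q hq =>
    have hDq : D ∈ 𝓝 q := hD.mem_nhds hq
    hasDerivAt_snd_partial_of_continuousAt (eventually_of_mem hDq huz)
      (eventually_of_mem hDq huzs)
      ((Continuous.prodMk_left q.2).continuousAt.eventually (eventually_of_mem hDq hus))
      (huzs_cont.continuousAt hDq)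
  exact
    { eventually_hasFDerivAt := eventually_of_mem (hD.mem_nhds hp) fun q hq =>
        hasFDerivAt_of_continuousOn_partials hD huz hus huz_cont hus_cont hq
      hasFDerivAt_fst := hasFDerivAt_of_continuousOn_partials hD huzz huzs huzz_cont huzs_cont hp
      hasFDerivAt_snd := hasFDerivAt_of_continuousOn_partials hD husz huss huzs_cont huss_cont hp }

end SecondPartials

section PowerWeight

variable {p x t : ℝ} {v : ℝ → ℝ}

theorem hasDerivAt_mul_const_rpow_mul {v' : ℝ} (hx : x ≠ 0) (ht : t ≠ 0) (hv : HasDerivAt v v' x) :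
    HasDerivAt (fun y => (y * t) ^ p * v y) ((x * t) ^ p * (p / x * v x + v')) x := by
  have hxt : x * t ≠ 0 := mul_ne_zero hx ht
  convert! ((hasDerivAt_mul_const t).rpow_const (p := p) (Or.inl hxt)).mul hv using 1
  rw [Real.rpow_sub_one hxt]
  field_simp

theorem hasDerivAt_deriv_mul_const_rpow_mul {v'' : ℝ} (hx : x ≠ 0) (ht : t ≠ 0)
    (hv : ∀ᶠ y in 𝓝 x, DifferentiableAt ℝ v y) (hv' : HasDerivAt (deriv v) v'' x) :
    HasDerivAt (deriv fun y => (y * t) ^ p * v y)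
      ((x * t) ^ p * (v'' + 2 * p / x * deriv v x + p * (p - 1) / x ^ 2 * v x)) x := by
  have hfirst : (deriv fun y => (y * t) ^ p * v y)
      =ᶠ[𝓝 x] fun y => (y * t) ^ p * (p * y⁻¹ * v y + deriv v y) := by
    filter_upwards [hv, eventually_ne_nhds hx] with y hvy hy
    exact (hasDerivAt_mul_const_rpow_mul hy ht hvy.hasDerivAt).deriv
  have hfactor : HasDerivAt (fun y => p * y⁻¹ * v y + deriv v y)
      (p * -(x ^ 2)⁻¹ * v x + p * x⁻¹ * deriv v x + v'') x :=
    (((hasDerivAt_inv hx).const_mul p).mul hv.self_of_nhds.hasDerivAt).add hv'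
  convert! (hasDerivAt_mul_const_rpow_mul hx ht hfactor).congr_of_eventuallyEq hfirst using 1
  ring

end PowerWeight

/-- The point `(z, s) = ((x+t)²/4, (t-x)²/4)`; these are characteristic coordinates of
`∂ₓ² - ∂ₜ²`. -/
noncomputable def characteristicCoords (x t : ℝ) : ℝ × ℝ := ((x + t) ^ 2 / 4, (t - x) ^ 2 / 4)

theorem characteristicCoords_comm (x t : ℝ) :
    characteristicCoords x t = characteristicCoords t x := by
  ext <;> simp only [characteristicCoords] <;> ring

theorem characteristicCoords_self (x : ℝ) : characteristicCoords x x = (x ^ 2, 0) := by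
  ext <;> simp only [characteristicCoords] <;> ring

theorem characteristicCoords_fst_sub_snd (x t : ℝ) :
    (characteristicCoords x t).1 - (characteristicCoords x t).2 = x * t := by
  simp only [characteristicCoords]
  ring

theorem hasDerivAt_characteristicCoords (x t : ℝ) :
    HasDerivAt (fun y => characteristicCoords y t) ((x + t) / 2, (x - t) / 2) x := by
  refine HasDerivAt.prodMk ?_ ?_
  · convert! (((hasDerivAt_id x).add_const t).pow 2).div_const 4 using 1
    simp only [id]
    ring
  · convert! (((hasDerivAt_id x).const_sub t).pow 2).div_const 4 using 1
    simp only [id]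
    ring

theorem hasDerivAt_comp_characteristicCoords {U : ℝ × ℝ → ℝ} {a b x t : ℝ}
    (hU : HasFDerivAt U (differentialOfPartials ℝ a b) (characteristicCoords x t)) :
    HasDerivAt (fun y => U (characteristicCoords y t)) ((x + t) / 2 * a + (x - t) / 2 * b) x := by
  simpa [differentialOfPartials] using!
    hU.comp_hasDerivAt x (hasDerivAt_characteristicCoords x t)

/-- The function `H(x,t) = (xt)^{-l} U((x+t)²/4, (t-x)²/4)`, which turns solutions `U` of the
Euler–Poisson–Darboux equation into solutions of the singular wave equation. -/
noncomputable def epdTransform (l : ℝ) (U : ℝ × ℝ → ℝ) (x t : ℝ) : ℝ :=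
  (x * t) ^ (-l) * U (characteristicCoords x t)

theorem epdTransform_comm (l : ℝ) (U : ℝ × ℝ → ℝ) (x t : ℝ) :
    epdTransform l U x t = epdTransform l U t x := by
  rw [epdTransform, epdTransform, mul_comm x, characteristicCoords_comm]

namespace HasSecondPartialsAt

variable {U Uz Us : ℝ × ℝ → ℝ} {a b c x t : ℝ}

theorem eventually_hasDerivAt_comp_characteristicCoords
    (hU : HasSecondPartialsAt U Uz Us a b c (characteristicCoords x t)) :
    ∀ᶠ y in 𝓝 x, HasDerivAt (fun y => U (characteristicCoords y t))
      ((y + t) / 2 * Uz (characteristicCoords y t)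
        + (y - t) / 2 * Us (characteristicCoords y t)) y :=
  ((hasDerivAt_characteristicCoords x t).continuousAt.eventually hU.eventually_hasFDerivAt).mono
    fun _ => hasDerivAt_comp_characteristicCoords

theorem hasDerivAt_deriv_comp_characteristicCoords
    (hU : HasSecondPartialsAt U Uz Us a b c (characteristicCoords x t)) :
    HasDerivAt (deriv fun y => U (characteristicCoords y t))
      ((Uz (characteristicCoords x t) + Us (characteristicCoords x t)) / 2
        + ((x + t) / 2) ^ 2 * a + (x ^ 2 - t ^ 2) / 2 * b + ((x - t) / 2) ^ 2 * c) x := by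
  have hfirst := hU.eventually_hasDerivAt_comp_characteristicCoords.mono fun _ hy => hy.deriv
  have hUz := (((hasDerivAt_id x).add_const t).div_const 2).mul
    (hasDerivAt_comp_characteristicCoords hU.hasFDerivAt_fst)
  have hUs := (((hasDerivAt_id x).sub_const t).div_const 2).mul
    (hasDerivAt_comp_characteristicCoords hU.hasFDerivAt_snd)
  convert! (hUz.add hUs).congr_of_eventuallyEq hfirst using 1
  simp only [id]
  ring

theorem differentiableAt_epdTransform (l : ℝ) (hx : x ≠ 0) (ht : t ≠ 0)
    (hU : HasSecondPartialsAt U Uz Us a b c (characteristicCoords x t)) :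
    DifferentiableAt ℝ (fun y => epdTransform l U y t) x :=
  (hasDerivAt_mul_const_rpow_mul hx ht
    hU.eventually_hasDerivAt_comp_characteristicCoords.self_of_nhds).differentiableAt

theorem hasDerivAt_deriv_epdTransform (l : ℝ) (hx : x ≠ 0) (ht : t ≠ 0)
    (hU : HasSecondPartialsAt U Uz Us a b c (characteristicCoords x t)) :
    HasDerivAt (deriv fun y => epdTransform l U y t)
      ((x * t) ^ (-l) * ((Uz (characteristicCoords x t) + Us (characteristicCoords x t)) / 2
          + ((x + t) / 2) ^ 2 * a + (x ^ 2 - t ^ 2) / 2 * b + ((x - t) / 2) ^ 2 * c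
          - 2 * l / x * ((x + t) / 2 * Uz (characteristicCoords x t)
            + (x - t) / 2 * Us (characteristicCoords x t)))
        + l * (l + 1) / x ^ 2 * epdTransform l U x t) x := by
  have hv := hU.eventually_hasDerivAt_comp_characteristicCoords
  convert! hasDerivAt_deriv_mul_const_rpow_mul (p := -l) hx ht
    (hv.mono fun _ hy => hy.differentiableAt) hU.hasDerivAt_deriv_comp_characteristicCoords using 1
  rw [hv.self_of_nhds.deriv, epdTransform]
  ring

theorem epdTransform_singular_wave {l : ℝ} (hx : x ≠ 0) (ht : t ≠ 0)
    (hU : HasSecondPartialsAt U Uz Us a b c (characteristicCoords x t))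
    (hEPD : b + l / (x * t) * Uz (characteristicCoords x t)
      - l / (x * t) * Us (characteristicCoords x t) = 0) :
    DifferentiableAt ℝ (fun y => epdTransform l U y t) x ∧
    DifferentiableAt ℝ (deriv fun y => epdTransform l U y t) x ∧
    DifferentiableAt ℝ (fun r => epdTransform l U x r) t ∧
    DifferentiableAt ℝ (deriv fun r => epdTransform l U x r) t ∧
    deriv (deriv fun y => epdTransform l U y t) x - deriv (deriv fun r => epdTransform l U x r) t
      - l * (l + 1) / x ^ 2 * epdTransform l U x t
      + l * (l + 1) / t ^ 2 * epdTransform l U x t = 0 := by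
  have hU' := characteristicCoords_comm x t ▸ hU
  have hswap : (fun r => epdTransform l U x r) = fun r => epdTransform l U r x :=
    funext (epdTransform_comm l U x)
  have hxx := hU.hasDerivAt_deriv_epdTransform l hx ht
  have htt := hU'.hasDerivAt_deriv_epdTransform l ht hx
  rw [hswap]
  refine ⟨hU.differentiableAt_epdTransform l hx ht, hxx.differentiableAt,
    hU'.differentiableAt_epdTransform l ht hx, htt.differentiableAt, ?_⟩
  rw [hxx.deriv, htt.deriv, characteristicCoords_comm t x, epdTransform_comm l U t x, mul_comm t x]
  have hUz_coeff : (x ^ 2 - t ^ 2) / (x * t) = (x + t) / t - (x + t) / x := by field_simp; ring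
  have hUs_coeff : (x ^ 2 - t ^ 2) / (x * t) = (x - t) / x + (x - t) / t := by field_simp; ring
  linear_combination ((x * t) ^ (-l) * (x ^ 2 - t ^ 2)) * hEPD
    - (x * t) ^ (-l) * l * Uz (characteristicCoords x t) * hUz_coeff
    + (x * t) ^ (-l) * l * Us (characteristicCoords x t) * hUs_coeff

end HasSecondPartialsAt

theorem hasDerivAt_epdTransform_diag {U : ℝ × ℝ → ℝ} {a l x : ℝ} (hx : x ≠ 0)
    (hU : HasDerivAt (fun z => U (z, 0)) a (x ^ 2)) :
    HasDerivAt (fun y => epdTransform l U y y)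
      (2 * x * (x ^ 2) ^ (-l) * (a - l / x ^ 2 * U (x ^ 2, 0))) x := by
  have hdiag : (fun y => epdTransform l U y y) =
      (fun z => (z * 1) ^ (-l) * U (z, 0)) ∘ fun y => y ^ 2 := by
    ext y
    simp only [epdTransform, characteristicCoords_self, Function.comp_apply, mul_one, sq]
  have hsq : HasDerivAt (fun y : ℝ => y ^ 2) (2 * x) x := by simpa using hasDerivAt_pow 2 x
  rw [hdiag]
  convert! HasDerivAt.comp (h := fun y : ℝ => y ^ 2) x
    (hasDerivAt_mul_const_rpow_mul (p := -l) (pow_ne_zero 2 hx) one_ne_zero hU) hsq using 1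
  simp only [mul_one]
  ring

theorem hasDerivAt_epdTransform_diag_of_boundary {U : ℝ × ℝ → ℝ} {a c l x : ℝ} (hx : 0 < x)
    (hU : HasDerivAt (fun z => U (z, 0)) a (x ^ 2))
    (hbdry : a - l / x ^ 2 * U (x ^ 2, 0) = 1 / 4 * c * (x ^ 2) ^ (l - 1 / 2)) :
    HasDerivAt (fun y => epdTransform l U y y) (c / 2) x := by
  have hpow : x * ((x ^ 2) ^ (-l) * (x ^ 2) ^ (l - 1 / 2)) = 1 := by
    rw [← Real.rpow_add (by positivity), show -l + (l - 1 / 2) = -(1 / 2) by ring,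
      Real.rpow_neg (by positivity), ← Real.sqrt_eq_rpow, Real.sqrt_sq hx.le,
      mul_inv_cancel₀ hx.ne']
  convert! hasDerivAt_epdTransform_diag (l := l) hx.ne' hU using 1
  rw [hbdry]
  linear_combination -(c / 2) * hpow

theorem isOpen_setOf_pos_snd_lt_fst : IsOpen {p : ℝ × ℝ | 0 < p.2 ∧ p.2 < p.1} :=
  (isOpen_lt continuous_const continuous_snd).inter (isOpen_lt continuous_snd continuous_fst)

theorem characteristicCoords_pos_lt {x t : ℝ} (hx : 0 < x) (hxt : x < t) :
    0 < (characteristicCoords x t).2 ∧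
      (characteristicCoords x t).2 < (characteristicCoords x t).1 := by
  have hpos : 0 < t - x := sub_pos.2 hxt
  refine ⟨div_pos (pow_pos hpos 2) four_pos, ?_⟩
  rw [← sub_pos, characteristicCoords_fst_sub_snd]
  exact mul_pos hx (hx.trans hxt)

theorem stmt_10_general (b l : ℝ)
    (u uz us uzz uss uzs : ℝ → ℝ → ℝ)
    (huz : ∀ z s : ℝ, 0 ≤ s → s < z → HasDerivAt (fun z' => u z' s) (uz z s) z)
    (huzz : ∀ z s : ℝ, 0 ≤ s → s < z → HasDerivAt (fun z' => uz z' s) (uzz z s) z)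
    (hus : ∀ z s : ℝ, 0 ≤ s → s < z →
      HasDerivWithinAt (fun s' => u z s') (us z s) (Set.Ici 0) s)
    (huss : ∀ z s : ℝ, 0 ≤ s → s < z →
      HasDerivWithinAt (fun s' => us z s') (uss z s) (Set.Ici 0) s)
    (huzs : ∀ z s : ℝ, 0 ≤ s → s < z →
      HasDerivWithinAt (fun s' => uz z s') (uzs z s) (Set.Ici 0) s)
    (hcont : ContinuousOn
      (fun p : ℝ × ℝ => (u p.1 p.2, uz p.1 p.2, us p.1 p.2, uzz p.1 p.2, uss p.1 p.2, uzs p.1 p.2))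
      {p : ℝ × ℝ | 0 ≤ p.2 ∧ p.2 < p.1})
    (hPDE : ∀ z s : ℝ, 0 ≤ s → s < z →
      uzs z s + l / (z - s) * uz z s - l / (z - s) * us z s = 0)
    (H : ℝ → ℝ → ℝ)
    (hH : ∀ x t : ℝ, H x t = (x * t) ^ (-l) * u ((x + t) ^ 2 / 4) ((t - x) ^ 2 / 4)) :
    (∀ x t : ℝ, 0 < x → x < t →
      DifferentiableAt ℝ (fun y => H y t) x ∧
      DifferentiableAt ℝ (deriv fun y => H y t) x ∧
      DifferentiableAt ℝ (fun s' => H x s') t ∧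
      DifferentiableAt ℝ (deriv fun s' => H x s') t ∧
      deriv (deriv fun y => H y t) x - deriv (deriv fun s' => H x s') t -
          l * (l + 1) / x ^ 2 * H x t + l * (l + 1) / t ^ 2 * H x t = 0) ∧
    (∀ h : ℝ → ℝ,
      (∀ z ∈ Set.Ioc (0:ℝ) (b ^ 2),
        uz z 0 - l / z * u z 0 = 1 / 4 * h (Real.sqrt z) * z ^ (l - 1/2)) →
      ∀ x ∈ Set.Ioc (0:ℝ) b,
        HasDerivAt (fun y => H y y) (h x / 2) x) := by
  obtain rfl : H = epdTransform l ↿u := funext₂ hH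
  set D : Set (ℝ × ℝ) := {p | 0 < p.2 ∧ p.2 < p.1}
  have hcontD := hcont.mono (fun p (hp : p ∈ D) => ⟨hp.1.le, hp.2⟩)
  have hU : ∀ p ∈ D, HasSecondPartialsAt ↿u ↿uz ↿us (↿uzz p) (↿uzs p) (↿uss p) p := fun p =>
    hasSecondPartialsAt_of_continuousOn isOpen_setOf_pos_snd_lt_fst
      (fun q hq => huz q.1 q.2 hq.1.le hq.2)
      (fun q hq => (hus q.1 q.2 hq.1.le hq.2).hasDerivAt (Ici_mem_nhds hq.1))
      (fun q hq => huzz q.1 q.2 hq.1.le hq.2)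
      (fun q hq => (huzs q.1 q.2 hq.1.le hq.2).hasDerivAt (Ici_mem_nhds hq.1))
      (fun q hq => (huss q.1 q.2 hq.1.le hq.2).hasDerivAt (Ici_mem_nhds hq.1))
      hcontD.snd.fst hcontD.snd.snd.fst hcontD.snd.snd.snd.fst hcontD.snd.snd.snd.snd.snd
      hcontD.snd.snd.snd.snd.fst
  constructor
  · intro x t hx hxt
    have hp : characteristicCoords x t ∈ D := characteristicCoords_pos_lt hx hxt
    have hEPD := hPDE _ _ hp.1.le hp.2
    rw [characteristicCoords_fst_sub_snd] at hEPD
    exact (hU _ hp).epdTransform_singular_wave hx.ne' (hx.trans hxt).ne' hEPD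
  · intro h hbdry x hx
    have hbdryx := hbdry (x ^ 2) ⟨pow_pos hx.1 2, pow_le_pow_left₀ hx.1.le hx.2 2⟩
    rw [Real.sqrt_sq hx.1.le] at hbdryx
    exact hasDerivAt_epdTransform_diag_of_boundary hx.1
      (huz (x ^ 2) 0 le_rfl (pow_pos hx.1 2)) hbdryx

/-- The change of variables `z = (x+t)²/4`, `s = (t-x)²/4`
(`z - s = xt`) transforms solutions of the Euler–Poisson–Darboux-type equation
`u_{zs} + (l/(z-s))(u_z - u_s) = 0` into solutions
`H(x,t) = (xt)^{-l} u((x+t)²/4,(t-x)²/4)` of the singular hyperbolic equation,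
and transforms the boundary condition `u_z(z,0) - (l/z)u(z,0) = h(√z)z^{l-1/2}/4`
into the Goursat data `d/dx[H(x,x)] = h(x)/2`. -/
theorem stmt_10 (b l : ℝ) (hb : 0 < b) (hl : -(1/2) ≤ l)
    (u uz us uzz uss uzs : ℝ → ℝ → ℝ)
    (huz : ∀ z s : ℝ, 0 ≤ s → s < z → HasDerivAt (fun z' => u z' s) (uz z s) z)
    (huzz : ∀ z s : ℝ, 0 ≤ s → s < z → HasDerivAt (fun z' => uz z' s) (uzz z s) z)
    (hus : ∀ z s : ℝ, 0 ≤ s → s < z →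
      HasDerivWithinAt (fun s' => u z s') (us z s) (Set.Ici 0) s)
    (huss : ∀ z s : ℝ, 0 ≤ s → s < z →
      HasDerivWithinAt (fun s' => us z s') (uss z s) (Set.Ici 0) s)
    (huzs : ∀ z s : ℝ, 0 ≤ s → s < z →
      HasDerivWithinAt (fun s' => uz z s') (uzs z s) (Set.Ici 0) s)
    (hcont : ContinuousOn
      (fun p : ℝ × ℝ => (u p.1 p.2, uz p.1 p.2, us p.1 p.2, uzz p.1 p.2, uss p.1 p.2, uzs p.1 p.2))
      {p : ℝ × ℝ | 0 ≤ p.2 ∧ p.2 < p.1})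
    (hPDE : ∀ z s : ℝ, 0 ≤ s → s < z →
      uzs z s + l / (z - s) * uz z s - l / (z - s) * us z s = 0)
    (H : ℝ → ℝ → ℝ)
    (hH : ∀ x t : ℝ, H x t = (x * t) ^ (-l) * u ((x + t) ^ 2 / 4) ((t - x) ^ 2 / 4)) :
    (∀ x t : ℝ, 0 < x → x < t →
      DifferentiableAt ℝ (fun y => H y t) x ∧
      DifferentiableAt ℝ (deriv fun y => H y t) x ∧
      DifferentiableAt ℝ (fun s' => H x s') t ∧
      DifferentiableAt ℝ (deriv fun s' => H x s') t ∧
      deriv (deriv fun y => H y t) x - deriv (deriv fun s' => H x s') t -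
          l * (l + 1) / x ^ 2 * H x t + l * (l + 1) / t ^ 2 * H x t = 0) ∧
    (∀ h : ℝ → ℝ, ContinuousOn h (Set.Icc 0 b) →
      (∀ z ∈ Set.Ioc (0:ℝ) (b ^ 2),
        uz z 0 - l / z * u z 0 = 1 / 4 * h (Real.sqrt z) * z ^ (l - 1/2)) →
      ∀ x ∈ Set.Ioc (0:ℝ) b,
        HasDerivWithinAt (fun y => H y y) (h x / 2) (Set.Ioc 0 b) x) := by
  exact (stmt_10_general b l u uz us uzz uss uzs huz huzz hus huss huzs hcont hPDE H hH).imp_right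
    fun hdiag h _ hbdry x hx => (hdiag h hbdry x hx).hasDerivWithinAt
end

section
/- Let l ≥ -1/2 be real and let n ≥ 1 be an integer. Let p_{4n-1}(x,t) = Σ_{k even, 0 ≤ k ≤ 2n} C(2n,k)·x^{2n-k}·t^k (where C(2n,k) is the binomial coefficient). Then for all x > 0, t > 0, applying the operator Y_l first in the variable t and then in the variable x to p_{4n-1} yields Y_{l,x}Y_{l,t}[p_{4n-1}](x,t) = Σ_{k even, 0 ≤ k ≤ 2n} C(2n,k) · [Γ(n+(1-k)/2)·Γ((k+1)/2)·Γ(l+1)² / (2^{2l+3}·Γ(l+3/2)²·Γ(n+l+(3-k)/2)·Γ(l+(k+3)/2))] · x^{2n-k+l+1}·t^{k+l+1}. -/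
/-!
Up to the substitution `u = s ^ 2`, the integral defining `Y_l[s ^ a]` is a Beta integral, so
`Y_l` maps the power `s ^ a` to a multiple of `x ^ (a + l + 1)`. By linearity, `Y_{l,x} Y_{l,t}`
multiplies each monomial `x ^ a * t ^ b` by the product of the factors of its two powers, besides
raising both exponents by `l + 1`.
-/

open Real MeasureTheory
open ProbabilityTheory (beta beta_pos beta_eq_betaIntegralReal)

section BetaIntegrals

variable {x : ℝ}

lemma integral_rpow_mul_sub_rpow {α β : ℝ} (hα : 0 < α) (hβ : 0 < β) (hx : 0 < x) :
    ∫ u in (0:ℝ)..x, u ^ (α - 1) * (x - u) ^ (β - 1) = x ^ (α + β - 1) * beta α β := by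
  have integrand_ofReal :
      ∫ u in (0:ℝ)..x, (u : ℂ) ^ ((α : ℂ) - 1) * ((x : ℂ) - u) ^ ((β : ℂ) - 1) =
      ((∫ u in (0:ℝ)..x, u ^ (α - 1) * (x - u) ^ (β - 1) : ℝ) : ℂ) := by
    rw [← intervalIntegral.integral_ofReal]
    refine intervalIntegral.integral_congr fun u hu => ?_
    rw [Set.uIcc_of_le hx.le] at hu
    simp only [Complex.ofReal_mul, Complex.ofReal_cpow hu.1,
      Complex.ofReal_cpow (sub_nonneg.mpr hu.2), Complex.ofReal_sub, Complex.ofReal_one]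
  have power_ofReal : (x : ℂ) ^ ((α : ℂ) + β - 1) = ((x ^ (α + β - 1) : ℝ) : ℂ) := by
    simp only [Complex.ofReal_cpow hx.le, Complex.ofReal_sub, Complex.ofReal_add,
      Complex.ofReal_one]
  have scaled := congrArg Complex.re (Complex.betaIntegral_scaled α β hx)
  rwa [integrand_ofReal, power_ofReal, Complex.ofReal_re, Complex.re_ofReal_mul,
    ← beta_eq_betaIntegralReal α β hα hβ] at scaled

lemma integral_rpow_sub_rpow_rpow_mul_rpow {p α β : ℝ} (hp : 0 < p) (hα : 0 < α) (hβ : 0 < β)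
    (hx : 0 < x) :
    ∫ s in (0:ℝ)..x, (x ^ p - s ^ p) ^ (β - 1) * s ^ (α - 1) =
      x ^ (α + p * (β - 1)) / p * beta (α / p) β := by
  have substitution := intervalIntegral.integral_comp_mul_deriv_of_deriv_nonneg (a := 0) (b := x)
    (f := fun s => s ^ p) (f' := fun s => p * s ^ (p - 1))
    (g := fun u => u ^ (α / p - 1) * (x ^ p - u) ^ (β - 1))
    (continuous_rpow_const hp.le).continuousOn
    (fun s hs => hasDerivAt_rpow_const (Or.inl ((le_min le_rfl hx.le).trans_lt hs.1).ne'))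
    (fun s hs => mul_nonneg hp.le (rpow_nonneg ((le_min le_rfl hx.le).trans hs.1.le) _))
  have integrand_eq : ∀ s ∈ Set.Ioc 0 x,
      (s ^ p) ^ (α / p - 1) * (x ^ p - s ^ p) ^ (β - 1) * (p * s ^ (p - 1)) =
        p * ((x ^ p - s ^ p) ^ (β - 1) * s ^ (α - 1)) := by
    intro s hs
    have exponents_add : p * (α / p - 1) + (p - 1) = α - 1 := by field_simp; ring
    rw [← exponents_add, rpow_add hs.1, rpow_mul hs.1.le]
    ring
  have power_eq : (x ^ p) ^ (α / p + β - 1) = x ^ (α + p * (β - 1)) := by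
    rw [← rpow_mul hx.le]
    congr 1
    field_simp
    ring
  simp only [Function.comp_apply] at substitution
  rw [zero_rpow hp.ne', integral_rpow_mul_sub_rpow (div_pos hα hp) hβ (rpow_pos_of_pos hx p),
    power_eq, intervalIntegral.integral_of_le hx.le,
    setIntegral_congr_fun measurableSet_Ioc integrand_eq, integral_const_mul,
    ← intervalIntegral.integral_of_le hx.le] at substitution
  rw [div_mul_eq_mul_div, eq_div_iff hp.ne', mul_comm, substitution]

variable {l a : ℝ}

lemma integral_sq_sub_sq_rpow_mul_rpow (hl : -1 < l) (ha : -1 < a) (hx : 0 < x) :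
    ∫ s in (0:ℝ)..x, (x ^ 2 - s ^ 2) ^ l * s ^ a =
      x ^ (a + 2 * l + 1) / 2 * beta ((a + 1) / 2) (l + 1) := by
  have h := integral_rpow_sub_rpow_rpow_mul_rpow (α := a + 1) (β := l + 1) two_pos
    (by linarith) (by linarith) hx
  simp only [rpow_two, add_sub_cancel_right] at h
  rw [h, add_right_comm]

lemma intervalIntegrable_sq_sub_sq_rpow_mul_rpow (hl : -1 < l) (ha : -1 < a) (hx : 0 < x) :
    IntervalIntegrable (fun s => (x ^ 2 - s ^ 2) ^ l * s ^ a) volume 0 x := by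
  -- The integral of a non-integrable function is `0` by convention; this one is positive.
  apply intervalIntegral.intervalIntegrable_of_integral_ne_zero
  rw [integral_sq_sub_sq_rpow_mul_rpow hl ha hx]
  have : 0 < beta ((a + 1) / 2) (l + 1) := beta_pos (by linarith) (by linarith)
  positivity

end BetaIntegrals

/-- The transmutation operator `Y_l`, of Poisson (Erdélyi–Kober) type, intended for
`-1 < l` and `0 < x`. -/
noncomputable def poissonTransmutation (l : ℝ) (f : ℝ → ℝ) (x : ℝ) : ℝ :=
  x ^ (-l) / (2 ^ (l + 1/2) * Gamma (l + 3/2)) * ∫ s in (0:ℝ)..x, (x ^ 2 - s ^ 2) ^ l * f s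

/-- The factor by which `Y_l` multiplies the power `s ^ a` when turning it into
`x ^ (a + l + 1)`. -/
noncomputable def poissonTransmutationCoeff (l a : ℝ) : ℝ :=
  beta ((a + 1) / 2) (l + 1) / (2 ^ (l + 3/2) * Gamma (l + 3/2))

lemma poissonTransmutationCoeff_mul (l a b : ℝ) :
    poissonTransmutationCoeff l a * poissonTransmutationCoeff l b =
      Gamma ((a + 1) / 2) * Gamma ((b + 1) / 2) * Gamma (l + 1) ^ 2 /
        (2 ^ (2 * l + 3) * Gamma (l + 3/2) ^ 2 * Gamma (l + (a + 3) / 2) *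
          Gamma (l + (b + 3) / 2)) := by
  have two_rpow_sq : (2:ℝ) ^ (2 * l + 3) = 2 ^ (l + 3/2) * 2 ^ (l + 3/2) := by
    rw [← rpow_add two_pos]
    ring_nf
  have gamma_arg (c : ℝ) : (c + 1) / 2 + (l + 1) = l + (c + 3) / 2 := by ring
  simp only [poissonTransmutationCoeff, beta, gamma_arg, two_rpow_sq]
  ring

section Transmutation

variable {l x : ℝ}

lemma poissonTransmutation_rpow {a : ℝ} (hl : -1 < l) (ha : -1 < a) (hx : 0 < x) :
    poissonTransmutation l (fun s => s ^ a) x =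
      poissonTransmutationCoeff l a * x ^ (a + l + 1) := by
  have x_rpow : x ^ (a + l + 1) = x ^ (-l) * x ^ (a + 2 * l + 1) := by
    rw [← rpow_add hx]
    ring_nf
  have two_rpow : (2:ℝ) ^ (l + 3/2) = 2 ^ (l + 1/2) * 2 := by
    rw [← rpow_add_one two_ne_zero]
    ring_nf
  rw [poissonTransmutation, integral_sq_sub_sq_rpow_mul_rpow hl ha hx, poissonTransmutationCoeff,
    x_rpow, two_rpow]
  ring

lemma poissonTransmutation_sum_rpow {ι : Type*} (S : Finset ι) (c a : ι → ℝ) (hl : -1 < l)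
    (ha : ∀ i ∈ S, -1 < a i) (hx : 0 < x) :
    poissonTransmutation l (fun s => ∑ i ∈ S, c i * s ^ a i) x =
      ∑ i ∈ S, c i * poissonTransmutationCoeff l (a i) * x ^ (a i + l + 1) := by
  simp only [poissonTransmutation, Finset.mul_sum, mul_left_comm _ (c _)]
  rw [intervalIntegral.integral_finsetSum fun i hi =>
    (intervalIntegrable_sq_sub_sq_rpow_mul_rpow hl (ha i hi) hx).const_mul (c i), Finset.mul_sum]
  refine Finset.sum_congr rfl fun i hi => ?_
  rw [intervalIntegral.integral_const_mul, mul_left_comm, mul_assoc,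
    ← poissonTransmutation_rpow hl (ha i hi) hx, poissonTransmutation]

lemma poissonTransmutation_poissonTransmutation_sum_rpow {ι : Type*} (S : Finset ι)
    (c a b : ι → ℝ) {k t : ℝ} (hk : -1 < k) (hl : -1 < l) (ha : ∀ i ∈ S, -1 < a i)
    (hb : ∀ i ∈ S, -1 < b i) (hx : 0 < x) (ht : 0 < t) :
    poissonTransmutation k
        (fun r => poissonTransmutation l (fun s => ∑ i ∈ S, c i * r ^ a i * s ^ b i) t) x =
      ∑ i ∈ S, c i * (poissonTransmutationCoeff k (a i) * poissonTransmutationCoeff l (b i)) *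
        x ^ (a i + k + 1) * t ^ (b i + l + 1) := by
  have inner_eq (r : ℝ) :
      poissonTransmutation l (fun s => ∑ i ∈ S, c i * r ^ a i * s ^ b i) t =
        ∑ i ∈ S, c i * poissonTransmutationCoeff l (b i) * t ^ (b i + l + 1) * r ^ a i := by
    rw [poissonTransmutation_sum_rpow S _ b hl hb ht]
    exact Finset.sum_congr rfl fun i _ => by ring
  simp only [inner_eq]
  rw [poissonTransmutation_sum_rpow S _ a hk ha hx]
  exact Finset.sum_congr rfl fun i _ => by ring

end Transmutation

theorem stmt_11_general (l : ℝ) (hl : -1 < l) (n : ℕ) (x t : ℝ) (hx : 0 < x) (ht : 0 < t) :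
    x ^ (-l) / (2 ^ (l + 1/2) * Real.Gamma (l + 3/2)) *
        ∫ r in (0:ℝ)..x, (x ^ 2 - r ^ 2) ^ l *
          (t ^ (-l) / (2 ^ (l + 1/2) * Real.Gamma (l + 3/2)) *
            ∫ s in (0:ℝ)..t, (t ^ 2 - s ^ 2) ^ l *
              ∑ j ∈ Finset.range (n + 1),
                (Nat.choose (2 * n) (2 * j) : ℝ) * r ^ (2 * (n - j)) * s ^ (2 * j)) =
      ∑ j ∈ Finset.range (n + 1),
        (Nat.choose (2 * n) (2 * j) : ℝ) *
          (Real.Gamma ((n : ℝ) + (1 - 2 * (j : ℝ)) / 2) * Real.Gamma ((2 * (j : ℝ) + 1) / 2) *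
              Real.Gamma (l + 1) ^ 2 /
            (2 ^ (2 * l + 3) * Real.Gamma (l + 3/2) ^ 2 *
              Real.Gamma ((n : ℝ) + l + (3 - 2 * (j : ℝ)) / 2) *
              Real.Gamma (l + (2 * (j : ℝ) + 3) / 2))) *
          x ^ (2 * (n : ℝ) - 2 * (j : ℝ) + l + 1) * t ^ (2 * (j : ℝ) + l + 1) := by
  have neg_one_lt_cast (m : ℕ) : (-1 : ℝ) < m := neg_one_lt_zero.trans_le m.cast_nonneg
  have image := poissonTransmutation_poissonTransmutation_sum_rpow (Finset.range (n + 1))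
    (fun j => ((2 * n).choose (2 * j) : ℝ)) (fun j => (2 * (n - j) : ℕ)) (fun j => (2 * j : ℕ))
    hl hl (fun _ _ => neg_one_lt_cast _) (fun _ _ => neg_one_lt_cast _) hx ht
  simp only [poissonTransmutation, rpow_natCast] at image
  refine image.trans (Finset.sum_congr rfl fun j hj => ?_)
  have cast_exponent : ((2 * (n - j) : ℕ) : ℝ) = 2 * n - 2 * j := by
    rw [Nat.cast_mul, Nat.cast_sub (Finset.mem_range_succ_iff.mp hj), Nat.cast_ofNat, mul_sub]
  rw [poissonTransmutationCoeff_mul, cast_exponent, Nat.cast_mul, Nat.cast_ofNat,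
    show (2 * n - 2 * j + 1 : ℝ) / 2 = n + (1 - 2 * j) / 2 by ring,
    show l + (2 * n - 2 * j + 3 : ℝ) / 2 = n + l + (3 - 2 * j) / 2 by ring]

/-- The image of the wave polynomial
`p_{4n-1}(x,t) = Σ_{even k ≤ 2n} C(2n,k) x^{2n-k} t^k` under `Y_{l,x}Y_{l,t}`
(the operator `Y_l` applied first in `t`, then in `x`). The sum over even
`k = 2j`, `0 ≤ j ≤ n`. -/
theorem stmt_11 (l : ℝ) (hl : -(1/2) ≤ l) (n : ℕ) (hn : 1 ≤ n)
    (x t : ℝ) (hx : 0 < x) (ht : 0 < t) :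
    x ^ (-l) / (2 ^ (l + 1/2) * Real.Gamma (l + 3/2)) *
        ∫ r in (0:ℝ)..x, (x ^ 2 - r ^ 2) ^ l *
          (t ^ (-l) / (2 ^ (l + 1/2) * Real.Gamma (l + 3/2)) *
            ∫ s in (0:ℝ)..t, (t ^ 2 - s ^ 2) ^ l *
              ∑ j ∈ Finset.range (n + 1),
                (Nat.choose (2 * n) (2 * j) : ℝ) * r ^ (2 * (n - j)) * s ^ (2 * j)) =
      ∑ j ∈ Finset.range (n + 1),
        (Nat.choose (2 * n) (2 * j) : ℝ) *
          (Real.Gamma ((n : ℝ) + (1 - 2 * (j : ℝ)) / 2) * Real.Gamma ((2 * (j : ℝ) + 1) / 2) *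
              Real.Gamma (l + 1) ^ 2 /
            (2 ^ (2 * l + 3) * Real.Gamma (l + 3/2) ^ 2 *
              Real.Gamma ((n : ℝ) + l + (3 - 2 * (j : ℝ)) / 2) *
              Real.Gamma (l + (2 * (j : ℝ) + 3) / 2))) *
          x ^ (2 * (n : ℝ) - 2 * (j : ℝ) + l + 1) * t ^ (2 * (j : ℝ) + l + 1) := by
  exact stmt_11_general l (by linarith) n x t hx ht
end

section
/- Let b > 0, let l ≥ -1/2 be real, let ω > 0, and let q : [0,b] → ℂ be continuous. Define d(x) = Σ_{m=0}^∞ (-1)^m/(m!·Γ(m+l+3/2))·(ω/2)^{2m+l+1/2}·x^{2m+l+1} (so d(x) = √x·J_{l+1/2}(ωx)). Let N ∈ ℕ and let K_N(x,t) = Σ_{n=0}^N κ_n(x)·t^{2n+l+1}, where each κ_n is continuous on [0,b] and twice continuously differentiable on (0,b], and assume K_N satisfies ∂²K_N/∂x² - ∂²K_N/∂t² - (l(l+1)/x²)K_N + (l(l+1)/t²)K_N - q(x)K_N = 0 for all x, t ∈ (0,b]. Set q_N(x) = 2·d/dx[K_N(x,x)] and u_N(x) = d(x) + ∫₀ˣ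 K_N(x,t)·d(t) dt. Then for every x ∈ (0,b], u_N''(x) - (l(l+1)/x² + q(x))·u_N(x) + ω²·u_N(x) = (q_N(x) - q(x))·d(x). -/
/-!
For a finite-rank kernel the Leibniz rule applied twice gives
`u'' = d'' + (K(x,x) d)' + K_x(x,x) d + ∫ K_xx d`. Multiplying the hyperbolic equation by `d` and
integrating by parts twice, `∫ K_xx d` becomes the Wronskian of `K(x,·)` and `d` at `t = x` plus
`(V(x) + q(x) - ω²) ∫ K d`, where `V(x) = l(l+1)/x²`, since `d'' = (V - ω²) d` absorbs `V(t)`; the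
Wronskian vanishes at `t = 0` because the lowest power `t^(l+1)` of the kernel is also the leading
power of `d`. In the residual the terms with `d'` cancel and `K_x + K_t = q_N / 2` on the diagonal
remains. The differential equation for `d` is the contiguous relation of `₀F₁`.
-/

open Set Filter Topology MeasureTheory Complex

section SeparableKernel

variable {𝕜 ι : Type*} [RCLike 𝕜] {s : Finset ι} {a b x : ℝ}
  {κ κ' κ'' φ φ' φ'' : ι → ℝ → 𝕜} {y y' : ℝ → 𝕜}

/-- The finite-rank kernel `K(x,t) = ∑ i ∈ s, κ i x * φ i t`. Its partial derivatives are again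
separable: `∂ₓ` replaces `κ` by its derivative and `∂ₜ` replaces `φ`. -/
def separableKernel (s : Finset ι) (κ φ : ι → ℝ → 𝕜) (x t : ℝ) : 𝕜 :=
  ∑ i ∈ s, κ i x * φ i t

theorem hasDerivWithinAt_separableKernel_diag {S : Set ℝ}
    (hκ : ∀ i ∈ s, HasDerivWithinAt (κ i) (κ' i x) S x)
    (hφ : ∀ i ∈ s, HasDerivWithinAt (φ i) (φ' i x) S x) :
    HasDerivWithinAt (fun z => separableKernel s κ φ z z)
      (separableKernel s κ' φ x x + separableKernel s κ φ' x x) S x := by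
  refine (HasDerivWithinAt.fun_sum fun i hi => (hκ i hi).mul (hφ i hi)).congr_deriv ?_
  exact Finset.sum_add_distrib

theorem hasDerivAt_separableKernel_right {t : ℝ} (hφ : ∀ i ∈ s, HasDerivAt (φ i) (φ' i t) t) :
    HasDerivAt (separableKernel s κ φ x) (separableKernel s κ φ' x t) t :=
  HasDerivAt.fun_sum fun i hi => (hφ i hi).const_mul (κ i x)

theorem separableKernel_mul (t : ℝ) :
    separableKernel s κ φ x t * y t = separableKernel s κ (fun i t => φ i t * y t) x t := by
  simp only [separableKernel, Finset.sum_mul, mul_assoc]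

theorem intervalIntegrable_separableKernel_mul {c d : ℝ}
    (hφy : ∀ i ∈ s, IntervalIntegrable (fun t => φ i t * y t) volume c d) :
    IntervalIntegrable (fun t => separableKernel s κ φ x t * y t) volume c d := by
  simp only [separableKernel_mul]
  simpa only [Finset.sum_fn] using!
    IntervalIntegrable.sum s fun i hi => (hφy i hi).const_mul (κ i x)

theorem integral_separableKernel_mul {c d : ℝ}
    (hφy : ∀ i ∈ s, IntervalIntegrable (fun t => φ i t * y t) volume c d) :
    ∫ t in c..d, separableKernel s κ φ x t * y t = ∑ i ∈ s, κ i x * ∫ t in c..d, φ i t * y t := by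
  simp only [separableKernel_mul]
  simp only [separableKernel]
  rw [intervalIntegral.integral_finsetSum fun i hi => (hφy i hi).const_mul (κ i x)]
  simp only [intervalIntegral.integral_const_mul]

theorem hasDerivWithinAt_integral_separableKernel_mul {S : Set ℝ} (hx : a < x)
    (hκ : ∀ i ∈ s, HasDerivWithinAt (κ i) (κ' i x) S x)
    (hφ : ∀ i ∈ s, ContinuousOn (φ i) (Ioi a)) (hy : ContinuousOn y (Ioi a))
    (hφy : ∀ i ∈ s, ∀ z, a < z → IntervalIntegrable (fun t => φ i t * y t) volume a z) :
    HasDerivWithinAt (fun z => ∫ t in a..z, separableKernel s κ φ z t * y t)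
      (separableKernel s κ φ x x * y x + ∫ t in a..x, separableKernel s κ' φ x t * y t) S x := by
  have hprim : ∀ i ∈ s, HasDerivAt (fun z => ∫ t in a..z, φ i t * y t) (φ i x * y x) x :=
    fun i hi =>
      have hcont := (hφ i hi).mul hy
      intervalIntegral.integral_hasDerivAt_right (hφy i hi x hx)
        (hcont.stronglyMeasurableAtFilter isOpen_Ioi x hx) (hcont.continuousAt (Ioi_mem_nhds hx))
  have hexpand : ∀ z, a < z → ∫ t in a..z, separableKernel s κ φ z t * y t =
      ∑ i ∈ s, κ i z * ∫ t in a..z, φ i t * y t :=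
    fun z hz => integral_separableKernel_mul fun i hi => hφy i hi z hz
  refine ((HasDerivWithinAt.fun_sum fun i hi =>
    (hκ i hi).mul (hprim i hi).hasDerivWithinAt).congr_of_eventuallyEq ?_
      (hexpand x hx)).congr_deriv ?_
  · filter_upwards [nhdsWithin_le_nhds (Ioi_mem_nhds hx)] with z hz using hexpand z hz
  · rw [Finset.sum_add_distrib, integral_separableKernel_mul fun i hi => hφy i hi x hx,
      separableKernel_mul, add_comm]
    rfl

theorem integral_mul_sub_mul_eq_wronskian {A : Type*} [NormedRing A] [NormedAlgebra ℝ A]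
    [CompleteSpace A] {f f' f'' g g' g'' : ℝ → A} {w : A} (hx : a < x)
    (hf : ∀ t ∈ Ioc a x, HasDerivAt f (f' t) t) (hf' : ∀ t ∈ Ioc a x, HasDerivAt f' (f'' t) t)
    (hg : ∀ t ∈ Ioc a x, HasDerivAt g (g' t) t) (hg' : ∀ t ∈ Ioc a x, HasDerivAt g' (g'' t) t)
    (hint : IntervalIntegrable (fun t => f'' t * g t - f t * g'' t) volume a x)
    (ha : Tendsto (fun t => f' t * g t - f t * g' t) (𝓝[>] a) (𝓝 w)) :
    ∫ t in a..x, (f'' t * g t - f t * g'' t) = f' x * g x - f x * g' x - w := by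
  have hW : ∀ t ∈ Ioc a x,
      HasDerivAt (fun t => f' t * g t - f t * g' t) (f'' t * g t - f t * g'' t) t := fun t ht =>
    (((hf' t ht).mul (hg t ht)).sub ((hf t ht).mul (hg' t ht))).congr_deriv (by abel)
  exact intervalIntegral.integral_eq_sub_of_hasDerivAt_of_tendsto hx
    (fun t ht => hW t (Ioo_subset_Ioc_self ht)) hint ha
    ((hW x (right_mem_Ioc.2 hx)).continuousAt.tendsto.mono_left nhdsWithin_le_nhds)

theorem tendsto_wronskian_separableKernel {c : ℝ} {l : Filter ℝ}
    (hW : ∀ i ∈ s, Tendsto (fun t => φ' i t * y t - φ i t * y' t) l (𝓝 0)) :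
    Tendsto (fun t => separableKernel s κ φ' c t * y t - separableKernel s κ φ c t * y' t)
      l (𝓝 0) := by
  have hsum := tendsto_finsetSum s fun i hi => (hW i hi).const_mul (κ i c)
  simp only [mul_zero, Finset.sum_const_zero] at hsum
  refine hsum.congr fun t => ?_
  simp only [separableKernel, Finset.sum_mul, ← Finset.sum_sub_distrib, mul_sub, mul_assoc]

/-- The hyperbolic equation multiplied by `y` and integrated over `(a, x)`: two integrations by
parts move `∂ₜ²` from the kernel to `y`, and `y'' = (V - μ) y` removes the potential in `t`. -/
theorem integral_separableKernel_mul_of_hyperbolic {V q : ℝ → 𝕜} {μ : 𝕜} (hx : a < x)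
    (hφ : ∀ i ∈ s, ∀ t, a < t → HasDerivAt (φ i) (φ' i t) t)
    (hφ' : ∀ i ∈ s, ∀ t, a < t → HasDerivAt (φ' i) (φ'' i t) t)
    (hy : ∀ t, a < t → HasDerivAt y (y' t) t)
    (hy' : ∀ t, a < t → HasDerivAt y' ((V t - μ) * y t) t)
    (hφy : ∀ i ∈ s, IntervalIntegrable (fun t => φ i t * y t) volume a x)
    (hW : ∀ i ∈ s, Tendsto (fun t => φ' i t * y t - φ i t * y' t) (𝓝[>] a) (𝓝 0))
    (hK : ∀ t ∈ Ioc a x, separableKernel s κ'' φ x t - separableKernel s κ φ'' x t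
      - V x * separableKernel s κ φ x t + V t * separableKernel s κ φ x t
      - q x * separableKernel s κ φ x t = 0) :
    ∫ t in a..x, separableKernel s κ'' φ x t * y t =
      separableKernel s κ φ' x x * y x - separableKernel s κ φ x x * y' x
        + (V x + q x - μ) * ∫ t in a..x, separableKernel s κ φ x t * y t := by
  have hKy := intervalIntegrable_separableKernel_mul (κ := κ) (x := x) hφy
  have hKxxy := intervalIntegrable_separableKernel_mul (κ := κ'') (x := x) hφy
  have hpointwise : EqOn
      (fun t => separableKernel s κ'' φ x t * y t - (V x + q x - μ) *
        (separableKernel s κ φ x t * y t))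
      (fun t => separableKernel s κ φ'' x t * y t - separableKernel s κ φ x t *
        ((V t - μ) * y t)) (Ioc a x) := fun t ht => by
    linear_combination y t * hK t ht
  have hgreen := integral_mul_sub_mul_eq_wronskian hx
    (fun t ht => hasDerivAt_separableKernel_right (κ := κ) (x := x) fun i hi => hφ i hi t ht.1)
    (fun t ht => hasDerivAt_separableKernel_right fun i hi => hφ' i hi t ht.1)
    (fun t ht => hy t ht.1) (fun t ht => hy' t ht.1)
    ((hKxxy.sub (hKy.const_mul _)).congr (by rwa [uIoc_of_le hx.le]))
    (tendsto_wronskian_separableKernel hW)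
  rw [← intervalIntegral.integral_congr_Ioo_of_le hx.le (hpointwise.mono Ioo_subset_Ioc_self),
    intervalIntegral.integral_sub hKxxy (hKy.const_mul _),
    intervalIntegral.integral_const_mul] at hgreen
  linear_combination hgreen

theorem exists_hasDerivWithinAt_residual_of_hyperbolic {V q qN u : ℝ → 𝕜} {μ : 𝕜}
    (hκ : ∀ i ∈ s, ∀ x ∈ Ioc a b, HasDerivWithinAt (κ i) (κ' i x) (Ioc a b) x)
    (hκ' : ∀ i ∈ s, ∀ x ∈ Ioc a b, HasDerivWithinAt (κ' i) (κ'' i x) (Ioc a b) x)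
    (hφ : ∀ i ∈ s, ∀ t, a < t → HasDerivAt (φ i) (φ' i t) t)
    (hφ' : ∀ i ∈ s, ∀ t, a < t → HasDerivAt (φ' i) (φ'' i t) t)
    (hy : ∀ t, a < t → HasDerivAt y (y' t) t)
    (hy' : ∀ t, a < t → HasDerivAt y' ((V t - μ) * y t) t)
    (hφy : ∀ i ∈ s, ∀ x, a < x → IntervalIntegrable (fun t => φ i t * y t) volume a x)
    (hW : ∀ i ∈ s, Tendsto (fun t => φ' i t * y t - φ i t * y' t) (𝓝[>] a) (𝓝 0))
    (hK : ∀ x ∈ Ioc a b, ∀ t ∈ Ioc a b, separableKernel s κ'' φ x t - separableKernel s κ φ'' x t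
      - V x * separableKernel s κ φ x t + V t * separableKernel s κ φ x t
      - q x * separableKernel s κ φ x t = 0)
    (hqN : ∀ x ∈ Ioc a b,
      HasDerivWithinAt (fun z => separableKernel s κ φ z z) (qN x / 2) (Ioc a b) x)
    (hu : ∀ x ∈ Ioc a b, u x = y x + ∫ t in a..x, separableKernel s κ φ x t * y t) :
    ∃ u' u'' : ℝ → 𝕜,
      (∀ x ∈ Ioc a b, HasDerivWithinAt u (u' x) (Ioc a b) x) ∧
      (∀ x ∈ Ioc a b, HasDerivWithinAt u' (u'' x) (Ioc a b) x) ∧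
      ∀ x ∈ Ioc a b, u'' x - (V x + q x) * u x + μ * u x = (qN x - q x) * y x := by
  have hφc : ∀ i ∈ s, ContinuousOn (φ i) (Ioi a) := fun i hi =>
    HasDerivAt.continuousOn (hφ i hi)
  have hyc : ContinuousOn y (Ioi a) := HasDerivAt.continuousOn hy
  refine ⟨fun x => y' x + (separableKernel s κ φ x x * y x +
      ∫ t in a..x, separableKernel s κ' φ x t * y t),
    fun x => (V x - μ) * y x + (qN x / 2 * y x + separableKernel s κ φ x x * y' x +
      (separableKernel s κ' φ x x * y x + ∫ t in a..x, separableKernel s κ'' φ x t * y t)),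
    fun x hx => ?_, fun x hx => ?_, fun x hx => ?_⟩
  · exact ((hy x hx.1).hasDerivWithinAt.add (hasDerivWithinAt_integral_separableKernel_mul hx.1
      (fun i hi => hκ i hi x hx) hφc hyc hφy)).congr hu (hu x hx)
  · exact (hy' x hx.1).hasDerivWithinAt.add
      (((hqN x hx).mul (hy x hx.1).hasDerivWithinAt).add
        (hasDerivWithinAt_integral_separableKernel_mul hx.1
          (fun i hi => hκ' i hi x hx) hφc hyc hφy))
  · have hdiag : qN x / 2 = separableKernel s κ' φ x x + separableKernel s κ φ' x x :=
      (uniqueDiffOn_Ioc a b x hx).eq_deriv _ (hqN x hx)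
        (hasDerivWithinAt_separableKernel_diag (fun i hi => hκ i hi x hx)
          fun i hi => (hφ i hi x hx.1).hasDerivWithinAt)
    have hKxx := integral_separableKernel_mul_of_hyperbolic hx.1 hφ hφ' hy hy'
      (fun i hi => hφy i hi x hx.1) hW fun t ht => hK x hx t ⟨ht.1, ht.2.trans hx.2⟩
    rw [hu x hx]
    linear_combination hKxx - y x * hdiag

end SeparableKernel

theorem hasDerivAt_formalMultilinearSeries_sum {𝕜 F : Type*} [NontriviallyNormedField 𝕜]
    [NormedAddCommGroup F] [NormedSpace 𝕜 F] [CompleteSpace F]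
    {p : FormalMultilinearSeries 𝕜 𝕜 F} {z : 𝕜} (hz : ‖z‖ₑ < p.radius) :
    HasDerivAt p.sum (∑' n, z ^ n • (n + 1) • p.coeff (n + 1)) z := by
  have hz' : z ∈ Metric.eball (0 : 𝕜) p.derivSeries.radius := by
    simpa using hz.trans_le p.radius_le_radius_derivSeries
  have hsum := (p.derivSeries.hasSum hz').mapL (ContinuousLinearMap.apply 𝕜 F (1 : 𝕜))
  simp only [ContinuousLinearMap.apply_apply, FormalMultilinearSeries.apply_eq_pow_smul_coeff,
    smul_apply, FormalMultilinearSeries.derivSeries_coeff_one] at hsum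
  exact hsum.tsum_eq ▸ (p.hasFDerivAt_sum hz).hasDerivAt

section Hypergeometric

variable {a b : Multiset ℂ} {c z : ℂ}

theorem hasSum_regularizedHGFun (h : a.card ≤ b.card) :
    HasSum (fun n => regularizedHGFunCoeff a b n * z ^ n) (regularizedHGFun a b z) := by
  have hz : z ∈ Metric.eball (0 : ℂ) (regularizedHGFunSeries a b).radius := by
    simp [radius_regularizedHGFunSeries_eq_top h]
  simpa only [FormalMultilinearSeries.apply_eq_pow_smul_coeff, regularizedHGFunSeries_coeff,
    smul_eq_mul, mul_comm] using! (regularizedHGFunSeries a b).hasSum hz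

theorem succ_mul_regularizedHGFunCoeff_succ (n : ℕ) :
    (n + 1) * regularizedHGFunCoeff a b (n + 1) =
      a.prod * regularizedHGFunCoeff (a.map (· + 1)) (b.map (· + 1)) n := by
  have hn : (n : ℂ) + 1 ≠ 0 := Nat.cast_add_one_ne_zero n
  simp only [regularizedHGFunCoeff, Multiset.map_map, Function.comp_def, ascPochhammer_succ_left,
    Polynomial.eval_mul, Polynomial.eval_X, Polynomial.eval_comp, Polynomial.eval_add,
    Polynomial.eval_one, Multiset.prod_map_mul, Multiset.map_id', Nat.factorial_succ,
    Nat.cast_mul, Nat.cast_succ, add_right_comm _ (1 : ℂ), ← add_assoc]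
  field_simp

theorem hasDerivAt_regularizedHGFun (h : a.card ≤ b.card) :
    HasDerivAt (regularizedHGFun a b)
      (a.prod * regularizedHGFun (a.map (· + 1)) (b.map (· + 1)) z) z := by
  refine (hasDerivAt_formalMultilinearSeries_sum (p := regularizedHGFunSeries a b)
    (by simp [radius_regularizedHGFunSeries_eq_top h])).congr_deriv ?_
  have hcard : (a.map (· + 1)).card ≤ (b.map (· + 1)).card := by simpa using h
  rw [← (hasSum_regularizedHGFun hcard).tsum_eq, ← tsum_mul_left]
  refine tsum_congr fun n => ?_
  rw [regularizedHGFunSeries_coeff, nsmul_eq_mul, Nat.cast_succ,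
    succ_mul_regularizedHGFunCoeff_succ, smul_eq_mul]
  ring

theorem hasDerivAt_regularizedHGFun_zero_singleton :
    HasDerivAt (regularizedHGFun 0 {c}) (regularizedHGFun 0 {c + 1} z) z := by
  simpa using hasDerivAt_regularizedHGFun (a := 0) (b := {c}) (z := z) (by simp)

theorem regularizedHGFun_zero_singleton_contiguous :
    regularizedHGFun 0 {c} z =
      c * regularizedHGFun 0 {c + 1} z + z * regularizedHGFun 0 {c + 1 + 1} z := by
  have hsum (c : ℂ) := hasSum_regularizedHGFun (a := 0) (b := {c}) (z := z) (by simp)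
  have hshift : HasSum (fun n : ℕ => n * regularizedHGFunCoeff 0 {c + 1} n * z ^ n)
      (z * regularizedHGFun 0 {c + 1 + 1} z) := by
    rw [← hasSum_nat_add_iff' 1]
    simp only [Finset.sum_range_one, Nat.cast_zero, zero_mul, sub_zero]
    refine ((hsum (c + 1 + 1)).mul_left z).congr_fun fun n => ?_
    rw [Nat.cast_succ, succ_mul_regularizedHGFunCoeff_succ]
    simp only [Multiset.prod_zero, Multiset.map_zero, Multiset.map_singleton, one_mul, pow_succ]
    ring
  refine (hsum c).unique ((((hsum (c + 1)).mul_left c).add hshift).congr_fun fun n => ?_)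
  simp only [regularizedHGFunCoeff, Multiset.map_zero, Multiset.prod_zero, Multiset.map_singleton,
    Multiset.prod_singleton, div_eq_mul_inv, mul_inv_rev,
    one_div_Gamma_eq_self_mul_one_div_Gamma_add_one (c + n), one_mul]
  ring_nf

end Hypergeometric

section Bessel

variable {l ω x r : ℝ}

/-- The even entire factor of the Bessel function of the first kind:
`J_ν(ωx) = (ωx/2)^ν * besselEven (ν + 1) ω x`. It is Mathlib's regularized `₀F₁`. -/
noncomputable def besselEven (c : ℂ) (ω x : ℝ) : ℂ :=
  regularizedHGFun 0 {c} (-(ω * x / 2) ^ 2)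

theorem hasDerivAt_besselEven (c : ℂ) (ω x : ℝ) :
    HasDerivAt (besselEven c ω) (-((ω : ℂ) ^ 2 / 2 * x) * besselEven (c + 1) ω x) x := by
  have harg : HasDerivAt (fun x : ℝ => -((ω : ℂ) * x / 2) ^ 2) (-((ω : ℂ) ^ 2 / 2 * x)) x := by
    refine (((((hasDerivAt_id' x).ofReal_comp.const_mul (ω : ℂ)).div_const 2).fun_pow
      2).fun_neg).congr_deriv ?_
    rw [ofReal_one, pow_one, Nat.cast_ofNat]
    ring
  exact hasDerivAt_regularizedHGFun_zero_singleton.scomp x harg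

theorem continuous_besselEven (c : ℂ) (ω : ℝ) : Continuous (besselEven c ω) :=
  continuous_iff_continuousAt.2 fun x => (hasDerivAt_besselEven c ω x).continuousAt

theorem besselEven_contiguous (c : ℂ) (ω x : ℝ) :
    besselEven c ω x =
      c * besselEven (c + 1) ω x - (ω * x / 2) ^ 2 * besselEven (c + 1 + 1) ω x := by
  simp only [besselEven]
  rw [regularizedHGFun_zero_singleton_contiguous]
  ring

/-- The solution `√x J_{l+1/2}(ωx)` of `-d'' + (l(l+1)/x²) d = ω² d`, for `x > 0`. -/
noncomputable def besselRegular (l ω x : ℝ) : ℂ :=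
  ((ω / 2) ^ (l + 1 / 2) : ℝ) * ((x ^ (l + 1) : ℝ) * besselEven (l + 3 / 2) ω x)

/-- The derivative of `besselRegular l ω` at `x > 0`. -/
noncomputable def besselRegularDeriv (l ω x : ℝ) : ℂ :=
  ((ω / 2) ^ (l + 1 / 2) : ℝ) * ((l + 1) * (x ^ l : ℝ) * besselEven (l + 3 / 2) ω x
    - ω ^ 2 / 2 * (x ^ (l + 2) : ℝ) * besselEven (l + 3 / 2 + 1) ω x)

theorem ofReal_tsum_eq_besselRegular (hω : 0 < ω) (hx : 0 < x) :
    ((∑' m : ℕ, (-1 : ℝ) ^ m / ((m.factorial : ℝ) * Real.Gamma ((m : ℝ) + l + 3/2)) *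
      (ω / 2) ^ (2 * (m : ℝ) + l + 1/2) * x ^ (2 * (m : ℝ) + l + 1) : ℝ) : ℂ) =
      besselRegular l ω x := by
  have hpow (z r : ℝ) (hz : 0 < z) (m : ℕ) : z ^ (2 * (m : ℝ) + r) = z ^ r * (z ^ 2) ^ m := by
    rw [add_comm, ← pow_mul, ← Real.rpow_add_natCast hz.ne']
    push_cast
    rfl
  rw [besselRegular, besselEven, ← (hasSum_regularizedHGFun (by simp)).tsum_eq, ofReal_tsum,
    ← tsum_mul_left, ← tsum_mul_left]
  refine tsum_congr fun m => ?_
  have hΓ : Gamma (l + 3 / 2 + m) = (Real.Gamma (m + l + 3 / 2) : ℝ) := by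
    rw [← Gamma_ofReal]
    push_cast
    ring_nf
  rw [add_assoc (2 * (m : ℝ)) l, hpow _ _ (half_pos hω), add_assoc (2 * (m : ℝ)) l, hpow _ _ hx]
  simp only [regularizedHGFunCoeff, hΓ, Multiset.map_zero, Multiset.prod_zero,
    Multiset.map_singleton, Multiset.prod_singleton, neg_pow ((ω * x / 2 : ℂ) ^ 2)]
  push_cast
  ring

theorem hasDerivAt_ofReal_rpow (hx : 0 < x) (p : ℝ) :
    HasDerivAt (fun x : ℝ => ((x ^ p : ℝ) : ℂ)) ((p * x ^ (p - 1) : ℝ) : ℂ) x :=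
  (Real.hasDerivAt_rpow_const (Or.inl hx.ne')).ofReal_comp

theorem hasDerivAt_ofReal_rpow_add_one (hx : 0 < x) (r : ℝ) :
    HasDerivAt (fun x : ℝ => ((x ^ (r + 1) : ℝ) : ℂ)) ((r + 1 : ℝ) * (x ^ r : ℝ)) x := by
  simpa only [add_sub_cancel_right, ofReal_mul] using hasDerivAt_ofReal_rpow hx (r + 1)

theorem hasDerivAt_besselRegular (hx : 0 < x) :
    HasDerivAt (besselRegular l ω) (besselRegularDeriv l ω x) x := by
  refine (((hasDerivAt_ofReal_rpow hx (l + 1)).fun_mul (hasDerivAt_besselEven _ ω x)).const_mul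
    (((ω / 2) ^ (l + 1 / 2) : ℝ) : ℂ)).congr_deriv ?_
  rw [besselRegularDeriv, add_sub_cancel_right]
  simp only [Real.rpow_add hx, Real.rpow_one, Real.rpow_two]
  push_cast
  ring

theorem hasDerivAt_besselRegularDeriv (hx : 0 < x) :
    HasDerivAt (besselRegularDeriv l ω)
      (((l * (l + 1) / x ^ 2 : ℝ) - (ω ^ 2 : ℝ)) * besselRegular l ω x) x := by
  have hlead := ((hasDerivAt_ofReal_rpow hx l).const_mul ((l : ℂ) + 1)).fun_mul
    (hasDerivAt_besselEven (l + 3 / 2) ω x)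
  have htail := ((hasDerivAt_ofReal_rpow hx (l + 2)).const_mul ((ω : ℂ) ^ 2 / 2)).fun_mul
    (hasDerivAt_besselEven (l + 3 / 2 + 1) ω x)
  have hx' : (x : ℂ) ≠ 0 := ofReal_ne_zero.2 hx.ne'
  refine ((hlead.fun_sub htail).const_mul (((ω / 2) ^ (l + 1 / 2) : ℝ) : ℂ)).congr_deriv ?_
  rw [besselRegular, besselEven_contiguous (l + 3 / 2)]
  simp only [Real.rpow_add hx, Real.rpow_sub hx, Real.rpow_one, Real.rpow_two]
  push_cast
  field_simp
  ring

theorem intervalIntegrable_rpow_mul_besselRegular (hr : -1 < r + (l + 1)) (hx : 0 < x) :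
    IntervalIntegrable (fun t : ℝ => ((t ^ r : ℝ) : ℂ) * besselRegular l ω t) volume 0 x := by
  have hpow : IntervalIntegrable (fun t : ℝ => ((t ^ (r + (l + 1)) : ℝ) : ℂ)) volume 0 x :=
    have h := intervalIntegral.intervalIntegrable_rpow' (a := 0) (b := x) hr
    ⟨h.1.ofReal, h.2.ofReal⟩
  have heven := (continuous_besselEven (l + 3 / 2) ω).continuousOn (s := uIcc 0 x)
  refine ((hpow.mul_continuousOn heven).const_mul
    (((ω / 2) ^ (l + 1 / 2) : ℝ) : ℂ)).congr fun t ht => ?_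
  rw [uIoc_of_le hx.le] at ht
  simp only [besselRegular, Real.rpow_add ht.1 r, ofReal_mul]
  ring

theorem wronskian_rpow_besselRegular (hx : 0 < x) :
    ((r + 1 : ℝ) : ℂ) * ((x ^ r : ℝ) : ℂ) * besselRegular l ω x
      - ((x ^ (r + 1) : ℝ) : ℂ) * besselRegularDeriv l ω x =
    ((ω / 2) ^ (l + 1 / 2) : ℝ) *
      (((r - l) * x ^ (r + l + 1) : ℝ) * besselEven (l + 3 / 2) ω x
        + (ω ^ 2 / 2 * x ^ (r + l + 3) : ℝ) * besselEven (l + 3 / 2 + 1) ω x) := by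
  have hthree : x ^ (r + l + 3) = x ^ (r + l) * x ^ 3 := Real.rpow_add_natCast hx.ne' _ 3
  rw [besselRegular, besselRegularDeriv, hthree]
  simp only [Real.rpow_add hx, Real.rpow_one, Real.rpow_two]
  push_cast
  ring

theorem tendsto_wronskian_rpow_besselRegular (hr : -3 < r + l) (hr' : r = l ∨ -1 < r + l) :
    Tendsto (fun t : ℝ => ((r + 1 : ℝ) : ℂ) * ((t ^ r : ℝ) : ℂ) * besselRegular l ω t
      - ((t ^ (r + 1) : ℝ) : ℂ) * besselRegularDeriv l ω t) (𝓝[>] 0) (𝓝 0) := by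
  have hzero (p : ℝ) (hp : 0 < p) : Tendsto (fun t : ℝ => t ^ p) (𝓝[>] 0) (𝓝 0) := by
    simpa [hp.ne'] using ((Real.continuous_rpow_const hp.le).tendsto 0).mono_left nhdsWithin_le_nhds
  have hlead : Tendsto (fun t : ℝ => (r - l) * t ^ (r + l + 1)) (𝓝[>] 0) (𝓝 0) := by
    rcases hr' with rfl | hrl
    · simp
    · simpa using (hzero (r + l + 1) (by linarith)).const_mul (r - l)
  have htail : Tendsto (fun t : ℝ => ω ^ 2 / 2 * t ^ (r + l + 3)) (𝓝[>] 0) (𝓝 0) := by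
    simpa using (hzero (r + l + 3) (by linarith)).const_mul (ω ^ 2 / 2)
  have heven (c : ℂ) : Tendsto (besselEven c ω) (𝓝[>] 0) (𝓝 (besselEven c ω 0)) :=
    ((continuous_besselEven c ω).tendsto 0).mono_left nhdsWithin_le_nhds
  have hsum := ((hlead.ofReal.mul (heven (l + 3 / 2))).add
    (htail.ofReal.mul (heven (l + 3 / 2 + 1)))).const_mul (((ω / 2) ^ (l + 1 / 2) : ℝ) : ℂ)
  simp only [ofReal_zero, zero_mul, add_zero, mul_zero] at hsum
  refine hsum.congr' ?_
  filter_upwards [self_mem_nhdsWithin] with t ht using (wronskian_rpow_besselRegular ht).symm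

theorem tendsto_wronskian_two_mul_add_rpow_besselRegular (hl : -(3 / 2) < l) (n : ℕ) :
    Tendsto (fun t : ℝ =>
      ((2 * n + l + 1 : ℝ) : ℂ) * ((t ^ (2 * n + l) : ℝ) : ℂ) * besselRegular l ω t
        - ((t ^ (2 * n + l + 1) : ℝ) : ℂ) * besselRegularDeriv l ω t) (𝓝[>] 0) (𝓝 0) := by
  refine tendsto_wronskian_rpow_besselRegular (by linarith [n.cast_nonneg (α := ℝ)]) ?_
  rcases n.eq_zero_or_pos with rfl | hn
  · simp
  · have : (1 : ℝ) ≤ n := mod_cast hn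
    exact Or.inr (by linarith)

end Bessel

theorem stmt_16_general (b l ω : ℝ) (hl : -(3 / 2) < l) (hω : 0 < ω) (q : ℝ → ℂ) (d : ℝ → ℝ)
    (hd : ∀ x : ℝ, d x = ∑' m : ℕ,
        (-1 : ℝ) ^ m / ((m.factorial : ℝ) * Real.Gamma ((m : ℝ) + l + 3 / 2)) *
          (ω / 2) ^ (2 * (m : ℝ) + l + 1 / 2) * x ^ (2 * (m : ℝ) + l + 1))
    (N : ℕ) (κ κ' κ'' : ℕ → ℝ → ℂ)
    (hκ1 : ∀ n ≤ N, ∀ x ∈ Ioc (0:ℝ) b, HasDerivWithinAt (κ n) (κ' n x) (Ioc 0 b) x)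
    (hκ2 : ∀ n ≤ N, ∀ x ∈ Ioc (0:ℝ) b, HasDerivWithinAt (κ' n) (κ'' n x) (Ioc 0 b) x)
    (KN : ℝ → ℝ → ℂ)
    (hKN : ∀ x t : ℝ, KN x t =
      ∑ n ∈ Finset.range (N + 1), κ n x * ((t ^ (2 * (n : ℝ) + l + 1) : ℝ) : ℂ))
    (hPDE : ∀ x ∈ Ioc (0:ℝ) b, ∀ t ∈ Ioc (0:ℝ) b,
      (∑ n ∈ Finset.range (N + 1), κ'' n x * ((t ^ (2 * (n : ℝ) + l + 1) : ℝ) : ℂ)) -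
        (∑ n ∈ Finset.range (N + 1), κ n x *
          ((((2 * (n : ℝ) + l + 1) * (2 * (n : ℝ) + l) * t ^ (2 * (n : ℝ) + l - 1)) : ℝ) : ℂ)) -
        ((l * (l + 1) / x ^ 2 : ℝ) : ℂ) * KN x t + ((l * (l + 1) / t ^ 2 : ℝ) : ℂ) * KN x t -
        q x * KN x t = 0)
    (qN : ℝ → ℂ)
    (hqN : ∀ x ∈ Ioc (0:ℝ) b, HasDerivWithinAt (fun y => KN y y) (qN x / 2) (Ioc 0 b) x)
    (uN : ℝ → ℂ)
    (huN : ∀ x : ℝ, uN x = (d x : ℂ) + ∫ t in (0:ℝ)..x, KN x t * (d t : ℂ)) :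
    ∃ uN' uN'' : ℝ → ℂ,
      (∀ x ∈ Ioc (0:ℝ) b, HasDerivWithinAt uN (uN' x) (Ioc 0 b) x) ∧
      (∀ x ∈ Ioc (0:ℝ) b, HasDerivWithinAt uN' (uN'' x) (Ioc 0 b) x) ∧
      ∀ x ∈ Ioc (0:ℝ) b,
        uN'' x - (((l * (l + 1) / x ^ 2 : ℝ) : ℂ) + q x) * uN x + ((ω ^ 2 : ℝ) : ℂ) * uN x =
          (qN x - q x) * (d x : ℂ) := by
  obtain rfl : KN = separableKernel (Finset.range (N + 1)) κ
      fun n t => ((t ^ (2 * (n : ℝ) + l + 1) : ℝ) : ℂ) := funext₂ hKN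
  have hbessel (x : ℝ) (hx : 0 < x) : (d x : ℂ) = besselRegular l ω x := by
    rw [hd, ofReal_tsum_eq_besselRegular hω hx]
  have hu : ∀ x ∈ Ioc 0 b, uN x = besselRegular l ω x + ∫ t in (0 : ℝ)..x,
      separableKernel (Finset.range (N + 1)) κ
        (fun n t => ((t ^ (2 * (n : ℝ) + l + 1) : ℝ) : ℂ)) x t * besselRegular l ω t := by
    intro x hx
    rw [huN, hbessel x hx.1, intervalIntegral.integral_congr_Ioo_of_le hx.1.le fun t ht => by
      rw [hbessel t ht.1]]
  obtain ⟨u', u'', hu', hu'', hres⟩ := exists_hasDerivWithinAt_residual_of_hyperbolic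
    (V := fun x => ((l * (l + 1) / x ^ 2 : ℝ) : ℂ)) (μ := ((ω ^ 2 : ℝ) : ℂ))
    (fun n hn => hκ1 n (Finset.mem_range_succ_iff.1 hn))
    (fun n hn => hκ2 n (Finset.mem_range_succ_iff.1 hn))
    (fun n _ t ht => hasDerivAt_ofReal_rpow_add_one ht (2 * (n : ℝ) + l))
    (fun n _ t ht => ((hasDerivAt_ofReal_rpow ht (2 * (n : ℝ) + l)).const_mul _).congr_deriv
      (by rw [← ofReal_mul, mul_assoc]))
    (fun t ht => hasDerivAt_besselRegular ht) (fun t ht => hasDerivAt_besselRegularDeriv ht)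
    (fun n _ x hx => intervalIntegrable_rpow_mul_besselRegular
      (by linarith [n.cast_nonneg (α := ℝ)]) hx)
    (fun n _ => tendsto_wronskian_two_mul_add_rpow_besselRegular hl n) hPDE hqN hu
  exact ⟨u', u'', hu', hu'', fun x hx => by rw [hbessel x hx.1, hres x hx]⟩

/-- For the approximate transmutation kernel
`K_N(x,t) = Σ_{n=0}^N κ_n(x) t^{2n+l+1}` solving the singular hyperbolic equation,
the approximate solution `u_N = d + ∫₀ˣ K_N(x,t) d(t) dt` (with
`d(x) = √x J_{l+1/2}(ωx)`) has residual
`u_N'' - (l(l+1)/x² + q)u_N + ω²u_N = (q_N - q)·d`, where `q_N = 2 d/dx[K_N(x,x)]`. -/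
theorem stmt_16 (b l ω : ℝ) (hb : 0 < b) (hl : -(1/2) ≤ l) (hω : 0 < ω)
    (q : ℝ → ℂ) (hq : ContinuousOn q (Set.Icc 0 b))
    (d : ℝ → ℝ)
    (hd : ∀ x : ℝ, d x = ∑' m : ℕ,
        (-1 : ℝ) ^ m / ((m.factorial : ℝ) * Real.Gamma ((m : ℝ) + l + 3/2)) *
          (ω / 2) ^ (2 * (m : ℝ) + l + 1/2) * x ^ (2 * (m : ℝ) + l + 1))
    (N : ℕ) (κ κ' κ'' : ℕ → ℝ → ℂ)
    (hκc : ∀ n ≤ N, ContinuousOn (κ n) (Set.Icc 0 b))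
    (hκ1 : ∀ n ≤ N, ∀ x ∈ Set.Ioc (0:ℝ) b, HasDerivWithinAt (κ n) (κ' n x) (Set.Ioc 0 b) x)
    (hκ2 : ∀ n ≤ N, ∀ x ∈ Set.Ioc (0:ℝ) b, HasDerivWithinAt (κ' n) (κ'' n x) (Set.Ioc 0 b) x)
    (hκ2c : ∀ n ≤ N, ContinuousOn (κ'' n) (Set.Ioc 0 b))
    (KN : ℝ → ℝ → ℂ)
    (hKN : ∀ x t : ℝ, KN x t =
      ∑ n ∈ Finset.range (N + 1), κ n x * ((t ^ (2 * (n : ℝ) + l + 1) : ℝ) : ℂ))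
    -- the singular hyperbolic equation for K_N (the t-derivatives computed explicitly)
    (hPDE : ∀ x ∈ Set.Ioc (0:ℝ) b, ∀ t ∈ Set.Ioc (0:ℝ) b,
      (∑ n ∈ Finset.range (N + 1), κ'' n x * ((t ^ (2 * (n : ℝ) + l + 1) : ℝ) : ℂ)) -
        (∑ n ∈ Finset.range (N + 1), κ n x *
          ((((2 * (n : ℝ) + l + 1) * (2 * (n : ℝ) + l) * t ^ (2 * (n : ℝ) + l - 1)) : ℝ) : ℂ)) -
        ((l * (l + 1) / x ^ 2 : ℝ) : ℂ) * KN x t + ((l * (l + 1) / t ^ 2 : ℝ) : ℂ) * KN x t -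
        q x * KN x t = 0)
    (qN : ℝ → ℂ)
    (hqN : ∀ x ∈ Set.Ioc (0:ℝ) b, HasDerivWithinAt (fun y => KN y y) (qN x / 2) (Set.Ioc 0 b) x)
    (uN : ℝ → ℂ)
    (huN : ∀ x : ℝ, uN x = (d x : ℂ) + ∫ t in (0:ℝ)..x, KN x t * (d t : ℂ)) :
    ∃ uN' uN'' : ℝ → ℂ,
      (∀ x ∈ Set.Ioc (0:ℝ) b, HasDerivWithinAt uN (uN' x) (Set.Ioc 0 b) x) ∧
      (∀ x ∈ Set.Ioc (0:ℝ) b, HasDerivWithinAt uN' (uN'' x) (Set.Ioc 0 b) x) ∧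
      ∀ x ∈ Set.Ioc (0:ℝ) b,
        uN'' x - (((l * (l + 1) / x ^ 2 : ℝ) : ℂ) + q x) * uN x + ((ω ^ 2 : ℝ) : ℂ) * uN x =
          (qN x - q x) * (d x : ℂ) := by
  exact stmt_16_general b l ω (by linarith) hω q d hd N κ κ' κ'' hκ1 hκ2 KN hKN hPDE qN hqN uN huN
end

section
/- Let l ≥ -1/2 be real and let σ ∈ (-1,0). Then the hypergeometric series ₂F₁(-l,-l;1;σ) = Σ_{n=0}^∞ ((-l)_n/n!)²·σⁿ converges, and |Σ_{n=0}^∞ ((-l)_n/n!)²·σⁿ| ≤ Σ_{n=0}^{⌊l+1⌋} ((-l)_n/n!)², where (a)_n = a(a+1)⋯(a+n-1) denotes the Pochhammer symbol and ⌊·⌋ the floor function. -/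
/-!
The ratio of consecutive coefficients `(-l)_n / n!` is `(n - l) / (n + 1)`, which has absolute
value at most `1` exactly when `-1 ≤ l ≤ 2 n + 1`. So from any index `N` with `l ≤ 2 N + 1` on, the
series at `σ ∈ (-1, 0)` alternates with decreasing absolute values. Such a tail is bounded by its
first term, and the terms before it are bounded by the triangle inequality. The index `⌊l + 1⌋` is
one admissible `N`.
-/

section EventuallyAntitoneCoefficients

variable {c : ℕ → ℝ} {x : ℝ} {N : ℕ}

theorem summable_mul_pow_of_antitoneOn_Ici (hc : AntitoneOn c (Set.Ici N))
    (hc_nonneg : ∀ n ≥ N, 0 ≤ c n) (hx : |x| < 1) : Summable fun n ↦ c n * x ^ n := by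
  have hc_bounded : c =O[Filter.atTop] fun n : ℕ ↦ ((n ^ 0 : ℕ) : ℝ) := by
    refine .of_bound (c N) ?_
    filter_upwards [Filter.eventually_ge_atTop N] with n hn
    simpa [abs_of_nonneg (hc_nonneg n hn)] using hc Set.self_mem_Ici hn hn
  exact (summable_norm_mul_geometric_of_norm_lt_one' hx hc_bounded).of_norm

theorem abs_tsum_mul_pow_le_of_antitone (hc : Antitone c) (hc_nonneg : ∀ n, 0 ≤ c n)
    (hx : -1 < x) (hx_nonpos : x ≤ 0) : |∑' n, c n * x ^ n| ≤ c 0 := by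
  have habs : |x| < 1 := abs_lt.2 ⟨hx, by linarith⟩
  have hterm (n : ℕ) : c n * x ^ n = (-1) ^ n * (c n * |x| ^ n) := by
    rw [mul_left_comm, ← mul_pow, abs_of_nonpos hx_nonpos, neg_one_mul, neg_neg]
  have hanti : Antitone fun n ↦ c n * |x| ^ n := fun m n hmn ↦
    mul_le_mul (hc hmn) (pow_right_anti₀ (abs_nonneg x) habs.le hmn) (by positivity) (hc_nonneg m)
  have hsum : Summable fun n ↦ c n * |x| ^ n :=
    summable_mul_pow_of_antitoneOn_Ici (hc.antitoneOn (Set.Ici 0)) (fun n _ ↦ hc_nonneg n)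
      (by rwa [abs_abs])
  simpa [hterm] using alternating_series_error_bound _ hanti hsum 0

theorem abs_tsum_mul_pow_le_sum_abs_of_antitoneOn_Ici (hc : AntitoneOn c (Set.Ici N))
    (hc_nonneg : ∀ n ≥ N, 0 ≤ c n) (hx : -1 < x) (hx_nonpos : x ≤ 0) :
    |∑' n, c n * x ^ n| ≤ ∑ n ∈ Finset.range (N + 1), |c n| := by
  have habs : |x| ≤ 1 := abs_le.2 ⟨hx.le, by linarith⟩
  have hsum : Summable fun n ↦ c n * x ^ n :=
    summable_mul_pow_of_antitoneOn_Ici hc hc_nonneg (abs_lt.2 ⟨hx, by linarith⟩)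
  have hhead : |∑ n ∈ Finset.range N, c n * x ^ n| ≤ ∑ n ∈ Finset.range N, |c n| := by
    refine (Finset.abs_sum_le_sum_abs _ _).trans (Finset.sum_le_sum fun n _ ↦ ?_)
    rw [abs_mul, abs_pow]
    exact mul_le_of_le_one_right (abs_nonneg _) (pow_le_one₀ (abs_nonneg x) habs)
  have htail : |∑' n, c (n + N) * x ^ (n + N)| ≤ |c N| := calc
    |∑' n, c (n + N) * x ^ (n + N)| = |∑' n, c (n + N) * x ^ n| * |x| ^ N := by
      simp only [pow_add, ← mul_assoc, tsum_mul_right, abs_mul, abs_pow]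
    _ ≤ |∑' n, c (n + N) * x ^ n| :=
      mul_le_of_le_one_right (abs_nonneg _) (pow_le_one₀ (abs_nonneg x) habs)
    _ ≤ c (0 + N) :=
      abs_tsum_mul_pow_le_of_antitone (c := fun n ↦ c (n + N))
        (antitone_add_nat_iff_antitoneOn_nat_Ici.2 hc)
        (fun n ↦ hc_nonneg _ (Nat.le_add_left N n)) hx hx_nonpos
    _ ≤ |c N| := by rw [zero_add]; exact le_abs_self _
  rw [← hsum.sum_add_tsum_nat_add N, Finset.sum_range_succ]
  exact (abs_add_le _ _).trans (add_le_add hhead htail)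

end EventuallyAntitoneCoefficients

section Pochhammer

variable {K : Type*} [Field K]

theorem prod_range_add_div_factorial_succ (a : K) (n : ℕ) :
    (∏ i ∈ Finset.range (n + 1), (a + (i : K))) / ((n + 1).factorial : K) =
      (∏ i ∈ Finset.range n, (a + (i : K))) / (n.factorial : K) * ((a + n) / (n + 1)) := by
  rw [Finset.prod_range_succ, Nat.factorial_succ, Nat.cast_mul, Nat.cast_succ,
    mul_comm ((n : K) + 1), mul_div_mul_comm]

theorem antitoneOn_abs_prod_range_add_div_factorial [LinearOrder K] [IsStrictOrderedRing K]
    {a : K} {N : ℕ} (ha : a ≤ 1) (hN : -a ≤ 2 * N + 1) :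
    AntitoneOn (fun n : ℕ ↦ |(∏ i ∈ Finset.range n, (a + (i : K))) / (n.factorial : K)|)
      (Set.Ici N) := by
  refine antitoneOn_nat_Ici_of_succ_le fun n hn ↦ ?_
  have hNn : (N : K) ≤ n := Nat.cast_le.2 hn
  have hpos : (0 : K) < n + 1 := n.cast_add_one_pos
  have hratio : |(a + n) / (n + 1)| ≤ 1 := by
    rw [abs_div, abs_of_pos hpos, div_le_one hpos, abs_le]
    constructor <;> linarith
  rw [prod_range_add_div_factorial_succ, abs_mul]
  exact mul_le_of_le_one_right (abs_nonneg _) hratio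

end Pochhammer

theorem stmt_18_general {l σ : ℝ} {N : ℕ} (hl : -1 ≤ l) (hN : l ≤ 2 * N + 1) (hσ : -1 < σ)
    (hσ_nonpos : σ ≤ 0) :
    Summable (fun n : ℕ =>
      ((∏ i ∈ Finset.range n, (-l + (i : ℝ))) / (n.factorial : ℝ)) ^ 2 * σ ^ n) ∧
    |∑' n : ℕ, ((∏ i ∈ Finset.range n, (-l + (i : ℝ))) / (n.factorial : ℝ)) ^ 2 * σ ^ n| ≤
      ∑ n ∈ Finset.range (N + 1),
        ((∏ i ∈ Finset.range n, (-l + (i : ℝ))) / (n.factorial : ℝ)) ^ 2 := by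
  have hanti : AntitoneOn (fun n : ℕ ↦
      ((∏ i ∈ Finset.range n, (-l + (i : ℝ))) / (n.factorial : ℝ)) ^ 2) (Set.Ici N) :=
    fun _ hm _ hn hmn ↦ sq_le_sq.2 <|
      antitoneOn_abs_prod_range_add_div_factorial (by linarith) (by linarith) hm hn hmn
  refine ⟨summable_mul_pow_of_antitoneOn_Ici hanti (fun _ _ ↦ sq_nonneg _)
    (abs_lt.2 ⟨hσ, by linarith⟩), ?_⟩
  simpa only [abs_sq] using
    abs_tsum_mul_pow_le_sum_abs_of_antitoneOn_Ici hanti (fun _ _ ↦ sq_nonneg _) hσ hσ_nonpos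

/-- For `l ≥ -1/2` and `σ ∈ (-1,0)` the hypergeometric series
`₂F₁(-l,-l;1;σ) = Σ ((-l)_n/n!)² σⁿ` converges and is bounded in absolute value by
`Σ_{n=0}^{⌊l+1⌋} ((-l)_n/n!)²`, where `(-l)_n = ∏_{i<n} (-l+i)` is the Pochhammer
symbol. -/
theorem stmt_18 (l σ : ℝ) (hl : -(1/2) ≤ l) (hσ1 : -1 < σ) (hσ2 : σ < 0) :
    Summable (fun n : ℕ =>
      ((∏ i ∈ Finset.range n, (-l + (i : ℝ))) / (n.factorial : ℝ)) ^ 2 * σ ^ n) ∧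
    |∑' n : ℕ, ((∏ i ∈ Finset.range n, (-l + (i : ℝ))) / (n.factorial : ℝ)) ^ 2 * σ ^ n| ≤
      ∑ n ∈ Finset.range (⌊l + 1⌋₊ + 1),
        ((∏ i ∈ Finset.range n, (-l + (i : ℝ))) / (n.factorial : ℝ)) ^ 2 := by
  have hfloor : l + 1 < ⌊l + 1⌋₊ + 1 := Nat.lt_floor_add_one (l + 1)
  exact stmt_18_general (by linarith) (by linarith) hσ1 hσ2.le
end
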